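/- Let p < q be prime numbers, let ℓ ≥ 2 be a natural number, let k₁, …, k_ℓ ∈ {0, 1, …, p−1} be pairwise distinct natural numbers, and let σ₁, …, σ_ℓ ∈ {1, −1}. Let s = Σ_{i=1}^{ℓ} σᵢ·kᵢ ∈ ℤ. Then the number of units a ∈ (ZMod q)ˣ satisfying a^s = Σ_{i=1}^{ℓ} σᵢ·a^{kᵢ} in ZMod q (where a^s denotes the integer power of the unit a, and each a^{kᵢ} is a natural power) is at most 2ℓp + 1. -/

import Mathlib

/-!
For a polynomial `Q` and an integer `s`, a unit `a` solves `a ^ s = Q(a)` exactly when it is a root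
of `X ^ s⁺ - X ^ s⁻ * Q`, whose degree is at most `|s| + deg Q`. Over a domain this bounds the
number of solutions unless the polynomial vanishes, which happens only for `Q = X ^ s`. A
combination of at least two distinct powers with coefficients `±1` is not a power of `X`, and for
exponents `kᵢ ≤ d` both `deg Q ≤ d` and `|∑ σᵢ kᵢ| ≤ ℓ * d`, so there are at most `(ℓ + 1) * d`
solutions.
-/

open Finset

section ZPowEquation

open Polynomial

variable {R : Type*} [CommRing R]

/-- The numerator `X ^ s⁺ - X ^ s⁻ * Q` of the Laurent polynomial `X ^ s - Q`, used to turn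
`a ^ s = Q(a)` into a polynomial equation. Since `Int.toNat` is `0` on negative integers, `s⁺` and
`s⁻` are `s.toNat` and `(-s).toNat`. -/
noncomputable def zpowSubNumerator (s : ℤ) (Q : R[X]) : R[X] :=
  X ^ s.toNat - X ^ (-s).toNat * Q

theorem eval_zpowSubNumerator_eq_zero_iff (s : ℤ) (Q : R[X]) (a : Rˣ) :
    (zpowSubNumerator s Q).eval (a : R) = 0 ↔ ((a ^ s : Rˣ) : R) = Q.eval (a : R) := by
  have hpow : a ^ s.toNat = a ^ (-s).toNat * a ^ s := by
    rw [← zpow_natCast, ← zpow_natCast, ← zpow_add]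
    congr 1
    lia
  have hval : (a : R) ^ s.toNat = (a : R) ^ (-s).toNat * ((a ^ s : Rˣ) : R) := by
    exact_mod_cast congrArg Units.val hpow
  rw [zpowSubNumerator, eval_sub, eval_mul, eval_X_pow, eval_X_pow, hval, sub_eq_zero,
    (a.isUnit.pow _).mul_right_inj]

theorem natDegree_zpowSubNumerator_le (s : ℤ) (Q : R[X]) :
    (zpowSubNumerator s Q).natDegree ≤ s.natAbs + Q.natDegree := by
  have hpos : s.toNat ≤ s.natAbs + Q.natDegree := by lia
  have hneg : (-s).toNat ≤ s.natAbs := by lia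
  exact (natDegree_sub_le _ _).trans <| max_le ((natDegree_X_pow_le _).trans hpos)
    (natDegree_mul_le_of_le ((natDegree_X_pow_le _).trans hneg) le_rfl)

theorem zpowSubNumerator_ne_zero [Nontrivial R] {s : ℤ} {Q : R[X]}
    (hQ : ∀ n : ℕ, s = n → Q ≠ X ^ n) : zpowSubNumerator s Q ≠ 0 := by
  intro hzero
  rw [zpowSubNumerator, sub_eq_zero] at hzero
  rcases le_or_gt 0 s with hs | hs
  · have hneg : (-s).toNat = 0 := by lia
    rw [hneg, pow_zero, one_mul] at hzero
    exact hQ s.toNat (Int.toNat_of_nonneg hs).symm hzero.symm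
  · have hpos : s.toNat = 0 := by lia
    have hneg : (-s).toNat ≠ 0 := by lia
    rw [hpos, pow_zero] at hzero
    exact not_isUnit_X (isUnit_of_dvd_one ((dvd_pow_self X hneg).trans ⟨Q, hzero⟩))

theorem encard_units_eval_eq_zero_le [IsDomain R] {P : R[X]} (hP : P ≠ 0) :
    {a : Rˣ | P.eval (a : R) = 0}.encard ≤ P.natDegree := by
  classical
  have hroots : Set.MapsTo Units.val {a : Rˣ | P.eval (a : R) = 0} P.roots.toFinset :=
    fun a ha => by simpa [hP] using ha
  refine (Set.encard_le_encard_of_injOn hroots Units.val_injective.injOn).trans ?_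
  rw [Set.encard_coe_eq_coe_finsetCard]
  exact_mod_cast P.roots.toFinset_card_le.trans P.card_roots'

theorem encard_units_zpow_eq_eval_le [IsDomain R] {s : ℤ} {Q : R[X]}
    (hQ : ∀ n : ℕ, s = n → Q ≠ X ^ n) :
    {a : Rˣ | ((a ^ s : Rˣ) : R) = Q.eval (a : R)}.encard ≤ (s.natAbs + Q.natDegree : ℕ) := by
  simp only [← eval_zpowSubNumerator_eq_zero_iff]
  exact (encard_units_eval_eq_zero_le (zpowSubNumerator_ne_zero hQ)).trans
    (by exact_mod_cast natDegree_zpowSubNumerator_le s Q)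

variable {ι : Type*} [Fintype ι]

theorem coeff_sum_C_mul_X_pow_of_injective {k : ι → ℕ} (hk : Function.Injective k) (c : ι → R)
    (i : ι) : (∑ j, C (c j) * X ^ k j).coeff (k i) = c i := by
  classical
  simp [coeff_X_pow, hk.eq_iff]

theorem sum_C_mul_X_pow_ne_X_pow [Nontrivial ι] {k : ι → ℕ} (hk : Function.Injective k)
    {c : ι → R} (hc : ∀ i, c i ≠ 0) (n : ℕ) : ∑ i, C (c i) * X ^ k i ≠ X ^ n := by
  obtain ⟨i, hi⟩ : ∃ i, k i ≠ n := by
    obtain ⟨i, j, hij⟩ := exists_pair_ne ι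
    by_contra! h
    exact hij (hk ((h i).trans (h j).symm))
  intro heq
  apply hc i
  rw [← coeff_sum_C_mul_X_pow_of_injective hk c i, heq, coeff_X_pow, if_neg hi]

theorem natDegree_sum_C_mul_X_pow_le {k : ι → ℕ} {d : ℕ} (hk : ∀ i, k i ≤ d) (c : ι → R) :
    (∑ i, C (c i) * X ^ k i).natDegree ≤ d :=
  natDegree_sum_le_of_forall_le _ _ fun i _ => (natDegree_C_mul_X_pow_le _ _).trans (hk i)

theorem natAbs_sum_mul_natCast_le {k : ι → ℕ} {d : ℕ} (hk : ∀ i, k i ≤ d) {σ : ι → ℤ}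
    (hσ : ∀ i, (σ i).natAbs ≤ 1) : (∑ i, σ i * (k i : ℤ)).natAbs ≤ Fintype.card ι * d :=
  calc (∑ i, σ i * (k i : ℤ)).natAbs
    _ ≤ ∑ i, (σ i * (k i : ℤ)).natAbs := Int.natAbs_sum_le _ _
    _ ≤ ∑ _i : ι, d := by
      gcongr with i
      rw [Int.natAbs_mul, Int.natAbs_natCast]
      exact (Nat.mul_le_mul (hσ i) (hk i)).trans_eq (one_mul d)
    _ = Fintype.card ι * d := by simp

theorem stmt12_general [IsDomain R] [Nontrivial ι] {k : ι → ℕ} {d : ℕ} (hk : ∀ i, k i ≤ d)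
    (hkinj : Function.Injective k) {σ : ι → ℤ} (hσ : ∀ i, σ i = 1 ∨ σ i = -1) :
    {a : Rˣ | ((a ^ (∑ i, σ i * (k i : ℤ)) : Rˣ) : R) =
      ∑ i, (σ i : R) * (a : R) ^ k i}.encard ≤ ((Fintype.card ι + 1) * d : ℕ) := by
  set s := ∑ i, σ i * (k i : ℤ)
  let Q : R[X] := ∑ i, C (σ i : R) * X ^ k i
  have hσR : ∀ i, (σ i : R) ≠ 0 := fun i => by rcases hσ i with h | h <;> simp [h]
  have heval (a : Rˣ) : Q.eval (a : R) = ∑ i, (σ i : R) * (a : R) ^ k i := by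
    simp [Q, eval_finsetSum]
  have hs : s.natAbs ≤ Fintype.card ι * d :=
    natAbs_sum_mul_natCast_le hk fun i => by rcases hσ i with h | h <;> simp [h]
  have hbound : s.natAbs + Q.natDegree ≤ (Fintype.card ι + 1) * d :=
    (add_le_add hs (natDegree_sum_C_mul_X_pow_le hk _)).trans_eq (by ring)
  simp only [← heval]
  exact (encard_units_zpow_eq_eval_le fun n _ => sum_C_mul_X_pow_ne_X_pow hkinj hσR n).trans
    (by exact_mod_cast hbound)

end ZPowEquation

theorem stmt12 (p q : ℕ) (hp : p.Prime) (hq : q.Prime) (hpq : p < q)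
    (ℓ : ℕ) (hℓ : 2 ≤ ℓ) (k : Fin ℓ → ℕ) (hk : ∀ i, k i < p)
    (hkinj : Function.Injective k)
    (σ : Fin ℓ → ℤ) (hσ : ∀ i, σ i = 1 ∨ σ i = -1) :
    Set.ncard {a : (ZMod q)ˣ |
        ((a ^ (∑ i, σ i * (k i : ℤ)) : (ZMod q)ˣ) : ZMod q) =
          ∑ i, (σ i : ZMod q) * ((a : ZMod q)) ^ (k i)} ≤ 2 * ℓ * p + 1 := by
  have : Fact q.Prime := ⟨hq⟩
  have : Nontrivial (Fin ℓ) := Fin.nontrivial_iff_two_le.mpr hℓ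
  refine (Set.encard_le_coe_iff_finite_ncard_le.mp
    (stmt12_general (fun i => (hk i).le) hkinj hσ)).2.trans ?_
  rw [Fintype.card_fin]
  nlinarith
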